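/- arXiv:2410.22305 — 2 statements merged into one kernel-verified Lean document; each statement's English description precedes it below -/
import Mathlib

section
/- For every sufficiently large integer k and every real 0 ≤ η ≤ 1/log k, the sum over all pairs of positive integers n, m with n·m² a perfect cube of d_k(n)d_k(m)/(nm)^{1-η} equals exp(O(k log log k)). -/
attribute [local instance] Classical.propDecidable

/-- The `k`-th divisor function `d_k(n)`. -/
noncomputable def dk (k n : ℕ) : ℕ := (ArithmeticFunction.zeta ^ k) n

def Pw (N : ℕ) : Prop := ∀ p : ℕ, p.Prime → p ∣ N → p ^ 2 ∣ N

lemma Pw_of_cube {n m c : ℕ} (h : n * m ^ 2 = c ^ 3) : Pw (n * m) := by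
  intro p hp hd
  by_cases h1 : p ∣ n
  · by_cases h2 : p ∣ m
    · rw [pow_two]; exact mul_dvd_mul h1 h2
    · have hc : p ∣ c := hp.dvd_of_dvd_pow (n := 3) (h ▸ h1.mul_right _)
      have h3 : p ^ 3 ∣ n * m ^ 2 := h ▸ pow_dvd_pow_of_dvd hc 3
      have hco : Nat.Coprime (p ^ 3) (m ^ 2) :=
        Nat.Coprime.pow _ _ ((Nat.Prime.coprime_iff_not_dvd hp).2 h2)
      have h4 := hco.dvd_of_dvd_mul_right h3
      exact ((pow_dvd_pow p (by norm_num)).trans h4).mul_right _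
  · have h2 : p ∣ m := (hp.dvd_mul.1 hd).resolve_left h1
    have hc : p ∣ c := by
      apply hp.dvd_of_dvd_pow (n := 3)
      rw [← h]
      exact (dvd_pow h2 (by norm_num)).mul_left _
    have h3 : p ^ 3 ∣ n * m ^ 2 := h ▸ pow_dvd_pow_of_dvd hc 3
    have hco : Nat.Coprime (p ^ 3) n :=
      Nat.Coprime.pow_left _ ((Nat.Prime.coprime_iff_not_dvd hp).2 h1)
    have h4 := hco.dvd_of_dvd_mul_left h3
    obtain ⟨m', rfl⟩ := h2
    have h5 : p ∣ m' ^ 2 := by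
      have : p ^ 2 * p ∣ p ^ 2 * m' ^ 2 := by
        rw [← mul_pow]; convert h4 using 1; ring
      exact Nat.dvd_of_mul_dvd_mul_left (pow_pos hp.pos 2) this
    have h6 := hp.dvd_of_dvd_pow h5
    rw [pow_two]
    exact (mul_dvd_mul_left p h6).mul_left _

lemma Pw_mul {m n : ℕ} (h : m.Coprime n) : Pw (m * n) ↔ Pw m ∧ Pw n := by
  constructor
  · intro H
    constructor
    · intro p hp hd
      have hco : Nat.Coprime (p ^ 2) n := Nat.Coprime.pow_left _ (h.coprime_dvd_left hd)
      exact hco.dvd_of_dvd_mul_right (H p hp (hd.mul_right _))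
    · intro p hp hd
      have hco : Nat.Coprime (p ^ 2) m := Nat.Coprime.pow_left _ (h.symm.coprime_dvd_left hd)
      exact hco.dvd_of_dvd_mul_left (H p hp (hd.mul_left _))
  · rintro ⟨h1, h2⟩ p hp hd
    rcases hp.dvd_mul.1 hd with h3 | h3
    · exact (h1 p hp h3).mul_right _
    · exact (h2 p hp h3).mul_left _

lemma Pw_prime_pow {p : ℕ} (hp : p.Prime) (e : ℕ) : Pw (p ^ e) ↔ e ≠ 1 := by
  constructor
  · rintro H rfl
    have := H p hp (by simp)
    rw [Nat.pow_dvd_pow_iff_le_right hp.one_lt] at this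
    omega
  · intro he q hq hd
    have := (Nat.prime_dvd_prime_iff_eq hq hp).1 (hq.dvd_of_dvd_pow hd)
    subst this
    rcases e with _ | _ | e
    · simp at hd; exact absurd hd hp.ne_one
    · omega
    · exact pow_dvd_pow _ (by omega)

lemma dk_prime_pow {p : ℕ} (hp : p.Prime) (j e : ℕ) :
    dk (j + 1) (p ^ e) = (e + j).choose j := by
  induction j generalizing e with
  | zero => simp [dk, ArithmeticFunction.zeta_apply, hp.ne_zero]
  | succ j ih =>
    have : dk (j + 1 + 1) (p ^ e) = ∑ i ∈ Finset.range (e + 1), dk (j + 1) (p ^ i) := by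
      unfold dk
      rw [pow_succ, ArithmeticFunction.mul_zeta_apply, Nat.sum_divisors_prime_pow hp]
    rw [this, Finset.sum_congr rfl (fun i _ => ih i), Nat.sum_range_add_choose]
    congr 1

noncomputable def gg (K : ℕ) (t : ℝ) (N : ℕ) : ℝ :=
  if Pw N then (dk K N : ℝ) * (N : ℝ) ^ (-t) else 0

lemma gg_nonneg (K : ℕ) (t : ℝ) (N : ℕ) : 0 ≤ gg K t N := by
  unfold gg; split_ifs <;> positivity

lemma dk_mult (K : ℕ) : (ArithmeticFunction.zeta ^ K).IsMultiplicative :=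
  ArithmeticFunction.isMultiplicative_zeta.pow

lemma gg_one (K : ℕ) (t : ℝ) : gg K t 1 = 1 := by
  have h : Pw 1 := by
    intro p hp hd
    exact absurd (Nat.dvd_one.1 hd) hp.ne_one
  have := (dk_mult K).map_one
  simp [gg, h, dk, this]

lemma gg_mul (K : ℕ) (t : ℝ) {m n : ℕ} (h : m.Coprime n) :
    gg K t (m * n) = gg K t m * gg K t n := by
  have h1 : dk K (m * n) = dk K m * dk K n := (dk_mult K).map_mul_of_coprime h
  unfold gg
  rw [Pw_mul h, h1]
  by_cases a : Pw m <;> by_cases b : Pw n <;> simp [a, b]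
  rw [Real.mul_rpow (by positivity) (by positivity)]
  ring

lemma gg_hasSum (j : ℕ) (t : ℝ) (ht : 0 < t) {p : ℕ} (hp : p.Prime) :
    HasSum (fun e : ℕ => gg (j + 1) t (p ^ e))
      (1 / (1 - (p : ℝ) ^ (-t)) ^ (j + 1) - (j + 1) * (p : ℝ) ^ (-t)) := by
  have hx1 : (p : ℝ) ^ (-t) < 1 :=
    Real.rpow_lt_one_of_one_lt_of_neg (by exact_mod_cast hp.one_lt) (by linarith)
  have hx0 : 0 ≤ (p : ℝ) ^ (-t) := by positivity
  have h1 := hasSum_choose_mul_geometric_of_norm_lt_one (𝕜 := ℝ) j (r := (p : ℝ) ^ (-t))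
    (by rwa [Real.norm_of_nonneg hx0])
  have h2 := hasSum_ite_eq (1 : ℕ) ((j + 1) * (p : ℝ) ^ (-t))
  have h3 := h1.sub h2
  suffices hs : (fun e : ℕ => gg (j + 1) t (p ^ e)) = fun e : ℕ =>
      ((e + j).choose j : ℝ) * ((p : ℝ) ^ (-t)) ^ e -
        (if e = 1 then ((j : ℝ) + 1) * (p : ℝ) ^ (-t) else 0) by
    rw [hs]; exact h3
  funext e
  have hpw : ((p ^ e : ℕ) : ℝ) ^ (-t) = ((p : ℝ) ^ (-t)) ^ e := by
    rw [Nat.cast_pow, ← Real.rpow_natCast, ← Real.rpow_natCast, ← Real.rpow_mul (by positivity),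
      ← Real.rpow_mul (by positivity), mul_comm]
  unfold gg
  rw [Pw_prime_pow hp, dk_prime_pow hp, hpw]
  by_cases he : e = 1
  · subst he
    rw [Nat.add_comm 1 j, Nat.choose_succ_self_right]
    simp
  · simp [he]

lemma factor_small {K : ℕ} {x : ℝ} (h0 : 0 ≤ x) (h1 : x ≤ 3 / 4) :
    1 / (1 - x) ^ K - K * x ≤ Real.exp (4 * K * x) := by
  have h2 : 1 / (1 - x) ≤ Real.exp (4 * x) := by
    refine le_trans ?_ (Real.add_one_le_exp _)
    rw [div_le_iff₀ (by linarith)]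
    nlinarith
  have h3 : 1 / (1 - x) ^ K ≤ Real.exp (4 * K * x) := by
    rw [← one_div_pow, show 4 * K * x = K * (4 * x) by ring, Real.exp_nat_mul]
    exact pow_le_pow_left₀ (by apply one_div_nonneg.2; linarith) h2 _
  have : 0 ≤ K * x := by positivity
  linarith

lemma factor_large {K : ℕ} (hK : 1 ≤ K) {x : ℝ} (h0 : 0 ≤ x) (h1 : K * x ≤ 1 / 2) :
    1 / (1 - x) ^ K - K * x ≤ Real.exp (8 * (K * x) ^ 2) := by
  have hK' : (1 : ℝ) ≤ K := by exact_mod_cast hK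
  have hx : x ≤ 1 / 2 := by nlinarith
  have h2 : 1 / (1 - x) ≤ Real.exp (x + 2 * x ^ 2) := by
    refine le_trans ?_ (Real.add_one_le_exp _)
    rw [div_le_iff₀ (by linarith)]
    nlinarith [mul_nonneg (sq_nonneg x) (by linarith : 0 ≤ 1 - 2 * x)]
  set t := K * x with ht
  have ht0 : 0 ≤ t := by positivity
  have hKx : K * (x + 2 * x ^ 2) ≤ t + 2 * t ^ 2 := by
    rw [ht]
    have : 0 ≤ K * x ^ 2 * (K - 1) := mul_nonneg (by positivity) (by linarith)
    nlinarith
  have h3 : 1 / (1 - x) ^ K ≤ Real.exp (t + 2 * t ^ 2) := by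
    refine le_trans ?_ (Real.exp_le_exp.2 hKx)
    rw [← one_div_pow, Real.exp_nat_mul]
    exact pow_le_pow_left₀ (by apply one_div_nonneg.2; linarith) h2 _
  have h4 := Real.abs_exp_sub_one_sub_id_le (x := t + 2 * t ^ 2)
    (by rw [abs_of_nonneg (by positivity)]; nlinarith)
  have h5 := (abs_le.1 h4).2
  have h6 := Real.add_one_le_exp (8 * t ^ 2)
  have h7 : (t + 2 * t ^ 2) ^ 2 ≤ (2 * t) ^ 2 := by
    apply pow_le_pow_left₀ (by positivity)
    nlinarith
  nlinarith

lemma prime_sum {s : ℝ} (hs : 1 < s) (M : ℕ) :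
    ∑ p ∈ M.primesBelow, (p : ℝ) ^ (-s) ≤ Real.log (∑' n : ℕ, 1 / (n : ℝ) ^ s) := by
  let f : ℕ →* ℝ :=
    { toFun := fun n => (n : ℝ) ^ (-s)
      map_one' := by simp
      map_mul' := fun a b => by
        push_cast
        rw [Real.mul_rpow (by positivity) (by positivity)] }
  have hf : ∀ n : ℕ, f n = (n : ℝ) ^ (-s) := fun _ => rfl
  have hsum : Summable (fun n : ℕ => f n) := by
    have := (Real.summable_one_div_nat_rpow (p := s)).2 hs
    refine this.congr (fun n => ?_)
    rw [hf, Real.rpow_neg (by positivity), one_div]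
  have hlt : ∀ p ∈ M.primesBelow, f p < 1 := by
    intro p hp
    have := Nat.prime_of_mem_primesBelow hp
    rw [hf]
    exact Real.rpow_lt_one_of_one_lt_of_neg (by exact_mod_cast this.one_lt) (by linarith)
  have h1 := EulerProduct.prod_primesBelow_geometric_eq_tsum_smoothNumbers (f := f) hsum M
  have h2 : ∑' m : M.smoothNumbers, f m ≤ ∑' n : ℕ, 1 / (n : ℝ) ^ s := by
    have : ∑' n : ℕ, 1 / (n : ℝ) ^ s = ∑' n : ℕ, f n := by
      congr 1; funext n
      rw [hf, Real.rpow_neg (by positivity), one_div]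
    rw [this]
    exact hsum.tsum_subtype_le (γ := ℝ) f M.smoothNumbers (fun n => by rw [hf]; positivity)
  have h3 : Real.exp (∑ p ∈ M.primesBelow, (p : ℝ) ^ (-s)) ≤ ∏ p ∈ M.primesBelow, (1 - f p)⁻¹ := by
    rw [Real.exp_sum]
    apply Finset.prod_le_prod (fun _ _ => (Real.exp_pos _).le)
    intro p hp
    have h4 := hlt p hp
    rw [← hf, le_inv_comm₀ (Real.exp_pos _) (by linarith), ← Real.exp_neg]
    linarith [Real.add_one_le_exp (-(f p))]
  rw [Real.le_log_iff_exp_le (lt_of_lt_of_le (Real.exp_pos _) (h3.trans (h1.trans_le h2)))]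
  exact h3.trans (h1.trans_le h2)

/-- pointwise bound for small primes -/
lemma small_pt {L η p : ℝ} (hL : 0 < L) (hη : η ≤ 1 / L) (hp : 1 ≤ p)
    (hpk : Real.log p ≤ 4 * L) :
    p ^ (-(1 - η)) ≤ Real.exp 8 * p ^ (-(1 + 1 / L)) := by
  have hp0 : 0 < p := by linarith
  rw [Real.rpow_def_of_pos hp0, Real.rpow_def_of_pos hp0, ← Real.exp_add, Real.exp_le_exp]
  have h0 : 0 ≤ Real.log p := Real.log_nonneg hp
  have h1 : Real.log p * η ≤ Real.log p * (1 / L) := mul_le_mul_of_nonneg_left hη h0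
  have h2 : Real.log p * (1 / L) ≤ 4 := by
    rw [mul_one_div, div_le_iff₀ hL]; exact hpk
  nlinarith

/-- pointwise bound for large primes -/
lemma large_pt {L η p : ℝ} (hL : 16 ≤ L) (hη : η ≤ 1 / L) (hp : 1 ≤ p)
    (hpk : 4 * L ≤ Real.log p) :
    (Real.exp L * p ^ (-(1 - η))) ^ 2 ≤ Real.exp 8 * p ^ (-(3 / 2 : ℝ)) := by
  have hp0 : 0 < p := by linarith
  have hL0 : 0 < L := by linarith
  rw [Real.rpow_def_of_pos hp0, Real.rpow_def_of_pos hp0, ← Real.exp_add, ← Real.exp_nat_mul,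
    ← Real.exp_add, Real.exp_le_exp]
  have hηL : η * L ≤ 1 := by rwa [le_div_iff₀ hL0] at hη
  have h3 : η ≤ 1 / 16 := hη.trans (one_div_le_one_div_of_le (by norm_num) hL)
  have h2 : 0 ≤ (Real.log p - 4 * L) * (1 / 2 - 2 * η) :=
    mul_nonneg (by linarith) (by linarith)
  push_cast
  nlinarith

lemma prod_bound : ∃ A : ℝ, ∀ k : ℕ, ∀ η : ℝ, 16 ≤ Real.log k → 0 ≤ η → η ≤ 1 / Real.log k →
    (∑' n : ℕ, 1 / (n : ℝ) ^ (1 + 1 / Real.log k)) ≤ 2 * Real.log k → ∀ M : ℕ,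
    ∏ p ∈ M.primesBelow, (1 / (1 - (p : ℝ) ^ (-(1 - η))) ^ (2 * k) -
      (2 * k : ℕ) * (p : ℝ) ^ (-(1 - η))) ≤ Real.exp (A * k * Real.log (Real.log k)) := by
  have hZ : Summable (fun n : ℕ => (n : ℝ) ^ (-(3 / 2 : ℝ))) :=
    Real.summable_nat_rpow.2 (by norm_num)
  set Z := ∑' n : ℕ, (n : ℝ) ^ (-(3 / 2 : ℝ)) with hZdef
  have hZ0 : 0 ≤ Z := tsum_nonneg (fun n => by positivity)
  refine ⟨16 * Real.exp 8 + 32 * Real.exp 8 * Z, ?_⟩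
  intro k η hL h0 hη hz M
  set L := Real.log k with hLdef
  have hL0 : 0 < L := by linarith
  have hk0 : (0 : ℝ) < k := by
    rcases Nat.eq_zero_or_pos k with h | h
    · subst h; simp [hLdef] at hL; linarith
    · exact_mod_cast h
  have hk : Real.exp L = k := Real.exp_log hk0
  have hkL : (17 : ℝ) ≤ k := by
    rw [← hk]; linarith [Real.add_one_le_exp L]
  have hηs : η ≤ 1 / 16 := hη.trans (one_div_le_one_div_of_le (by norm_num) hL)
  have hLL : 1 ≤ Real.log L := by
    rw [Real.le_log_iff_exp_le hL0]
    linarith [Real.exp_one_lt_d9]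
  have hpt : ∀ p ∈ M.primesBelow, (1 / (1 - (p : ℝ) ^ (-(1 - η))) ^ (2 * k) -
      (2 * k : ℕ) * (p : ℝ) ^ (-(1 - η))) ≤
      Real.exp (8 * k * Real.exp 8 * (p : ℝ) ^ (-(1 + 1 / L)) +
        32 * Real.exp 8 * (p : ℝ) ^ (-(3 / 2 : ℝ))) := by
    intro p hpm
    have hp := Nat.prime_of_mem_primesBelow hpm
    have hp2 : (2 : ℝ) ≤ p := by exact_mod_cast hp.two_le
    have hx0 : 0 ≤ (p : ℝ) ^ (-(1 - η)) := by positivity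
    have hu : 0 ≤ (p : ℝ) ^ (-(1 + 1 / L)) := by positivity
    have hv : 0 ≤ (p : ℝ) ^ (-(3 / 2 : ℝ)) := by positivity
    have he := Real.exp_pos 8
    rcases le_total (Real.log p) (4 * L) with hc | hc
    · have hx : (p : ℝ) ^ (-(1 - η)) ≤ 3 / 4 := by
        calc (p : ℝ) ^ (-(1 - η)) ≤ (p : ℝ) ^ (-(1 / 2 : ℝ)) :=
              Real.rpow_le_rpow_of_exponent_le (by linarith) (by linarith)
          _ ≤ (2 : ℝ) ^ (-(1 / 2 : ℝ)) :=
              Real.rpow_le_rpow_of_nonpos (by norm_num) hp2 (by norm_num)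
          _ ≤ 3 / 4 := by
              rw [Real.rpow_neg (by norm_num), ← Real.sqrt_eq_rpow]
              rw [inv_le_comm₀ (by positivity) (by norm_num)]
              apply Real.le_sqrt_of_sq_le
              norm_num
      refine (factor_small hx0 hx).trans (Real.exp_le_exp.2 ?_)
      have h1 := small_pt hL0 hη (by linarith) hc
      have h2 := mul_le_mul_of_nonneg_left h1 (by positivity : 0 ≤ 8 * (k : ℝ))
      have h3 : 0 ≤ 32 * Real.exp 8 * (p : ℝ) ^ (-(3 / 2 : ℝ)) := by positivity
      push_cast
      linarith
    · have h1 := large_pt hL hη (by linarith) hc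
      rw [hk] at h1
      have hx : ((2 * k : ℕ) : ℝ) * (p : ℝ) ^ (-(1 - η)) ≤ 1 / 2 := by
        have h5 : (p : ℝ) ^ (-(1 - η)) ≤ Real.exp (-(2 * L)) := by
          rw [Real.rpow_def_of_pos (by linarith), Real.exp_le_exp]
          nlinarith
        have h6 : Real.exp (-(2 * L)) = 1 / ((k : ℝ) * k) := by
          rw [Real.exp_neg, two_mul, Real.exp_add, hk, one_div]
        rw [h6] at h5
        calc ((2 * k : ℕ) : ℝ) * (p : ℝ) ^ (-(1 - η)) ≤ ((2 * k : ℕ) : ℝ) * (1 / ((k : ℝ) * k)) :=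
              mul_le_mul_of_nonneg_left h5 (by positivity)
          _ = 2 / k := by push_cast; field_simp
          _ ≤ 1 / 2 := by rw [div_le_iff₀ hk0]; linarith
      have hk1 : 1 ≤ 2 * k := by
        have : (17 : ℕ) ≤ k := by exact_mod_cast hkL
        omega
      refine (factor_large hk1 hx0 hx).trans (Real.exp_le_exp.2 ?_)
      have h3 : 0 ≤ 8 * k * Real.exp 8 * (p : ℝ) ^ (-(1 + 1 / L)) := by positivity
      push_cast
      nlinarith
  have hpos : ∀ p ∈ M.primesBelow, 0 ≤ (1 / (1 - (p : ℝ) ^ (-(1 - η))) ^ (2 * k) -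
      (2 * k : ℕ) * (p : ℝ) ^ (-(1 - η))) := by
    intro p hpm
    have hp := Nat.prime_of_mem_primesBelow hpm
    obtain ⟨j, hj⟩ : ∃ j, 2 * k = j + 1 := by
      have : (17 : ℕ) ≤ k := by exact_mod_cast hkL
      exact ⟨2 * k - 1, by omega⟩
    have := (gg_hasSum j (1 - η) (by linarith) hp).nonneg (fun e => gg_nonneg _ _ _)
    rw [hj]; push_cast; exact this
  refine (Finset.prod_le_prod hpos hpt).trans ?_
  rw [← Real.exp_sum, Real.exp_le_exp, Finset.sum_add_distrib, ← Finset.mul_sum, ← Finset.mul_sum]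
  have hs1 : ∑ p ∈ M.primesBelow, (p : ℝ) ^ (-(1 + 1 / L)) ≤ 2 * Real.log L := by
    refine (prime_sum (by simp [hL0]) M).trans ?_
    have hpos : 0 < ∑' n : ℕ, 1 / (n : ℝ) ^ (1 + 1 / L) := by
      have hsm := (Real.summable_one_div_nat_rpow (p := 1 + 1 / L)).2 (by simp [hL0])
      exact hsm.tsum_pos (fun n => by positivity) 1 (by simp)
    refine (Real.log_le_log hpos hz).trans ?_
    rw [Real.log_mul (by norm_num) hL0.ne', two_mul]
    gcongr
    linarith
  have hs2 : ∑ p ∈ M.primesBelow, (p : ℝ) ^ (-(3 / 2 : ℝ)) ≤ Z :=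
    hZ.sum_le_tsum _ (fun n _ => by positivity)
  have he := Real.exp_pos 8
  have h1 := mul_le_mul_of_nonneg_left hs1 (by positivity : 0 ≤ 8 * k * Real.exp 8)
  have h2 := mul_le_mul_of_nonneg_left hs2 (by positivity : 0 ≤ 32 * Real.exp 8)
  have h3 : 1 ≤ k * Real.log L := by nlinarith
  have h4 := mul_le_mul_of_nonneg_left h3 (by positivity : 0 ≤ 32 * Real.exp 8 * Z)
  nlinarith

lemma dk_two_mul (k N : ℕ) :
    dk (2 * k) N = ∑ x ∈ N.divisorsAntidiagonal, dk k x.1 * dk k x.2 := by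
  unfold dk
  rw [two_mul, pow_add, ArithmeticFunction.mul_apply]

lemma sum_smooth {K : ℕ} (hK : 1 ≤ K) {t : ℝ} (ht : 0 < t) (M : ℕ) (T : Finset ℕ)
    (hT : ∀ n ∈ T, 0 < n ∧ n < M) :
    ∑ n ∈ T, gg K t n ≤ ∏ p ∈ M.primesBelow, (1 / (1 - (p : ℝ) ^ (-t)) ^ K -
      K * (p : ℝ) ^ (-t)) := by
  obtain ⟨j, rfl⟩ : ∃ j, K = j + 1 := ⟨K - 1, by omega⟩
  have h := EulerProduct.summable_and_hasSum_smoothNumbers_prod_primesBelow_tsum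
    (f := gg (j + 1) t) (gg_one _ _) (fun {m n} h => gg_mul _ _ h)
    (fun {p} hp => by
      simpa [Real.norm_of_nonneg (gg_nonneg _ _ _)] using (gg_hasSum j t ht hp).summable) M
  have h1 : ∏ p ∈ M.primesBelow, (1 / (1 - (p : ℝ) ^ (-t)) ^ (j + 1) -
      ((j + 1 : ℕ) : ℝ) * (p : ℝ) ^ (-t)) =
      ∏ p ∈ M.primesBelow, ∑' e : ℕ, gg (j + 1) t (p ^ e) := by
    apply Finset.prod_congr rfl
    intro p hp
    rw [(gg_hasSum j t ht (Nat.prime_of_mem_primesBelow hp)).tsum_eq]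
    push_cast; rfl
  rw [h1, ← h.2.tsum_eq]
  have h2 : ∑ n ∈ T, gg (j + 1) t n =
      ∑ m ∈ T.subtype (· ∈ M.smoothNumbers), gg (j + 1) t m := by
    rw [Finset.sum_subtype_eq_sum_filter, Finset.filter_true_of_mem]
    intro n hn
    exact Nat.mem_smoothNumbers_of_lt (hT n hn).1 (hT n hn).2
  rw [h2]
  exact h.2.summable.sum_le_tsum _ (fun m _ => gg_nonneg _ _ _)

lemma pair_sum (k : ℕ) (η : ℝ) (F : Finset (ℕ × ℕ)) : ∃ M : ℕ, ∃ T : Finset ℕ,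
    (∀ n ∈ T, 0 < n ∧ n < M) ∧
    ∑ nm ∈ F, (if 0 < nm.1 ∧ 0 < nm.2 ∧ (∃ c : ℕ, nm.1 * nm.2 ^ 2 = c ^ 3)
        then (dk k nm.1 * dk k nm.2 : ℝ) / ((nm.1 * nm.2 : ℝ) ^ (1 - η)) else 0)
      ≤ ∑ n ∈ T, gg (2 * k) (1 - η) n := by
  set F' := F.filter (fun nm => 0 < nm.1 ∧ 0 < nm.2 ∧ (∃ c : ℕ, nm.1 * nm.2 ^ 2 = c ^ 3)) with hF'
  set T := F'.image (fun nm => nm.1 * nm.2) with hTdef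
  have hpw : ∀ n ∈ T, 0 < n ∧ Pw n := by
    intro n hn
    obtain ⟨nm, h1, rfl⟩ := Finset.mem_image.1 hn
    obtain ⟨-, ha, hb, c, hc⟩ := Finset.mem_filter.1 h1
    exact ⟨Nat.mul_pos ha hb, Pw_of_cube hc⟩
  refine ⟨T.sup id + 1, T, fun n hn => ⟨(hpw n hn).1, ?_⟩, ?_⟩
  · exact Nat.lt_succ_of_le (Finset.le_sup (f := id) hn)
  rw [← Finset.sum_filter, ← hF']
  rw [← Finset.sum_fiberwise_of_maps_to (g := fun nm : ℕ × ℕ => nm.1 * nm.2) (t := T)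
    (fun x hx => Finset.mem_image_of_mem _ hx)]
  apply Finset.sum_le_sum
  intro n hn
  obtain ⟨hn0, hn1⟩ := hpw n hn
  rw [gg, if_pos hn1, dk_two_mul]
  push_cast
  rw [Finset.sum_mul]
  calc _ = ∑ x ∈ F' with x.1 * x.2 = n, (dk k x.1 * dk k x.2 : ℝ) * (n : ℝ) ^ (-(1 - η)) := by
        apply Finset.sum_congr rfl
        intro x hx
        have := (Finset.mem_filter.1 hx).2
        rw [← Nat.cast_mul x.1 x.2, this, Real.rpow_neg (by positivity), div_eq_mul_inv]
    _ ≤ _ := by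
        apply Finset.sum_le_sum_of_subset_of_nonneg
        · intro x hx
          exact Nat.mem_divisorsAntidiagonal.2 ⟨(Finset.mem_filter.1 hx).2, hn0.ne'⟩
        · intros; positivity

theorem divisor_sum_cube_bound :
    ∃ A : ℝ, ∃ k₀ : ℕ, ∀ k : ℕ, k₀ ≤ k → ∀ η : ℝ, 0 ≤ η → η ≤ 1 / Real.log k →
      (∑' nm : ℕ × ℕ,
        if 0 < nm.1 ∧ 0 < nm.2 ∧ (∃ c : ℕ, nm.1 * nm.2 ^ 2 = c ^ 3)
        then (dk k nm.1 * dk k nm.2 : ℝ) / ((nm.1 * nm.2 : ℝ) ^ (1 - η)) else 0)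
      ≤ Real.exp (A * k * Real.log (Real.log k)) := by
  obtain ⟨A, hA⟩ := prod_bound
  have hlog : Filter.Tendsto (fun k : ℕ => Real.log k) Filter.atTop Filter.atTop :=
    Real.tendsto_log_atTop.comp tendsto_natCast_atTop_atTop
  have hz : ∀ᶠ k : ℕ in Filter.atTop,
      (∑' n : ℕ, 1 / (n : ℝ) ^ (1 + 1 / Real.log k)) ≤ 2 * Real.log k := by
    have h1 : ∀ᶠ s in nhdsWithin (1 : ℝ) (Set.Ioi 1),
        (s - 1) * ∑' (n : ℕ), 1 / (n : ℝ) ^ s < 2 :=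
      tendsto_sub_mul_tsum_nat_rpow.eventually_lt_const (by norm_num)
    have h2 : Filter.Tendsto (fun k : ℕ => 1 + 1 / Real.log k) Filter.atTop
        (nhdsWithin (1 : ℝ) (Set.Ioi 1)) := by
      rw [tendsto_nhdsWithin_iff]
      constructor
      · have h3 : Filter.Tendsto (fun k : ℕ => 1 / Real.log k) Filter.atTop (nhds 0) := by
          simp only [one_div]
          exact hlog.inv_tendsto_atTop
        simpa using h3.const_add 1
      · filter_upwards [hlog.eventually_ge_atTop 1] with k hk
        have : 0 < Real.log k := by linarith
        simp [this]
    filter_upwards [h2.eventually h1, hlog.eventually_ge_atTop 1] with k hk hk1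
    have h0 : 0 < Real.log k := by linarith
    rw [add_sub_cancel_left, one_div_mul_eq_div, div_lt_iff₀ h0] at hk
    exact hk.le
  obtain ⟨k₀, hk₀⟩ := Filter.eventually_atTop.1 (hz.and (hlog.eventually_ge_atTop 16))
  refine ⟨A, k₀ + 1, fun k hk η h0 hη => ?_⟩
  obtain ⟨h1, h2⟩ := hk₀ k (by omega)
  have hη1 : η ≤ 1 / 16 := hη.trans (one_div_le_one_div_of_le (by norm_num) h2)
  apply Real.tsum_le_of_sum_le
  · intro nm
    simp only [Pi.zero_apply]
    split_ifs <;> positivity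
  · intro F
    obtain ⟨M, T, hT, hle⟩ := pair_sum k η F
    exact hle.trans ((sum_smooth (by omega) (by linarith) M T hT).trans (hA k η h2 h0 hη h1 M))
end

section
/- Let ℓ be a positive integer and y ≥ 2. Then the sum over 2ℓ-tuples of primes p_1,...,p_{2ℓ} all exceeding y such that p_1···p_ℓ·p_{ℓ+1}²···p_{2ℓ}² is a perfect cube, of 1/(p_1···p_{2ℓ}), is at most 2^ℓ ℓ! (Σ_{p>y} 1/p²)^{ℓ}. -/
attribute [local instance] Classical.propDecidable

namespace PT

lemma exists_zeta : ∃ z : ℂ, z ^ 3 = 1 ∧ 1 + z + z ^ 2 = 0 := by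
  have h := Complex.isPrimitiveRoot_exp 3 (by norm_num)
  refine ⟨_, h.pow_eq_one, ?_⟩
  have := h.geom_sum_eq_zero (by norm_num)
  simpa [Finset.sum_range_succ] using this

lemma char_sum {z : ℂ} (h3 : z ^ 3 = 1) (h0 : 1 + z + z ^ 2 = 0) (m : ℕ) :
    ∑ a : Fin 3, z ^ (a.val * m) = if 3 ∣ m then 3 else 0 := by
  have hm := Nat.div_add_mod m 3
  have hz : ∀ k, z ^ (3 * k) = 1 := fun k => by rw [pow_mul, h3, one_pow]
  have key : ∀ a : ℕ, z ^ (a * m) = z ^ (a * (m % 3)) := by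
    intro a
    conv_lhs => rw [← hm, show a * (3 * (m / 3) + m % 3) = 3 * (a * (m/3)) + a * (m % 3) by ring,
      pow_add, hz, one_mul]
  simp only [Fin.sum_univ_three, key]
  have hlt : m % 3 < 3 := Nat.mod_lt _ (by norm_num)
  simp only [Nat.dvd_iff_mod_eq_zero]
  interval_cases m % 3
  · simp; norm_num
  · simpa using h0
  · simp
    linear_combination h0 + z * h3

/-- expectation identity -/
lemma expand {z : ℂ} (h3 : z ^ 3 = 1) (h0 : 1 + z + z ^ 2 = 0) {N M : ℕ} (x : Fin N → ℝ)
    (e : Fin M → ℕ) :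
    ∑ χ : Fin N → Fin 3, ∏ i, ∑ q, (x q : ℂ) * z ^ ((χ q).val * e i) =
      (((3 : ℝ) ^ N * ∑ p : Fin M → Fin N,
        if (∀ q, 3 ∣ ∑ i, if p i = q then e i else 0) then ∏ i, x (p i) else 0 : ℝ) : ℂ) := by
  simp only [Finset.prod_univ_sum, Fintype.piFinset_univ]
  rw [Finset.sum_comm]
  push_cast
  rw [Finset.mul_sum]
  refine Finset.sum_congr rfl fun p _ => ?_
  simp only [Finset.prod_mul_distrib]
  rw [← Finset.mul_sum]
  have h1 : ∀ χ : Fin N → Fin 3, ∏ i, z ^ ((χ (p i)).val * e i) =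
      ∏ q, z ^ ((χ q).val * ∑ i, if p i = q then e i else 0) := by
    intro χ
    rw [Finset.prod_pow_eq_pow_sum, Finset.prod_pow_eq_pow_sum]
    congr 1
    simp only [Finset.mul_sum]
    rw [Finset.sum_comm]
    simp
  simp only [h1]
  have h2 := (Finset.prod_univ_sum (fun _ : Fin N => (Finset.univ : Finset (Fin 3)))
    (fun q a => z ^ (a.val * ∑ i, if p i = q then e i else 0))).symm
  simp only [Fintype.piFinset_univ] at h2
  rw [h2]
  simp only [char_sum h3 h0]
  split_ifs with h
  · simp [h, mul_comm]
  · push Not at h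
    obtain ⟨q, hq⟩ := h
    rw [Finset.prod_eq_zero (Finset.mem_univ q) (by simp [hq])]
    simp

def X (a : Fin 3) : ℝ := if a = 0 then 2 else -1

lemma lower {N : ℕ} (x : Fin N → ℝ) (hx : ∀ q, 0 ≤ x q) (l : ℕ) :
    (3 : ℝ) ^ N * (Nat.choose (2 * l) l) * (∑ p : Fin (2 * l) → Fin N,
        if (∀ q, 3 ∣ ∑ i, if p i = q then (if i.val < l then 1 else 2) else 0)
          then ∏ i, x (p i) else 0) ≤
    ∑ χ : Fin N → Fin 3, (∑ q, x q * X (χ q)) ^ (2 * l) := by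
  obtain ⟨z, h3, h0⟩ := exists_zeta
  set R : ℕ → ℝ := fun k => ∑ p : Fin (2 * l) → Fin N,
        if (∀ q, 3 ∣ ∑ i, if p i = q then (if i.val < k then 1 else 2) else 0)
          then ∏ i, x (p i) else 0 with hR
  have hR0 : ∀ k, 0 ≤ R k := by
    intro k
    refine Finset.sum_nonneg fun p _ => ?_
    split_ifs
    · exact Finset.prod_nonneg fun i _ => hx _
    · exact le_rfl
  have key : ∑ χ : Fin N → Fin 3, (∑ q, x q * X (χ q)) ^ (2 * l) =
      ∑ k ∈ Finset.range (2 * l + 1), (3 : ℝ) ^ N * R k * (Nat.choose (2 * l) k) := by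
    apply Complex.ofReal_injective
    have hX : ∀ a : Fin 3, (X a : ℂ) = z ^ (a.val * 1) + z ^ (a.val * 2) := by
      intro a
      fin_cases a
      · simp [X]; norm_num
      · simp [X]; linear_combination -h0
      · simp [X]; linear_combination -h0 - z * h3
    have hk : ∀ k ∈ Finset.range (2 * l + 1), (((3 : ℝ) ^ N * R k : ℝ) : ℂ) =
        ∑ χ : Fin N → Fin 3, (∑ q, (x q : ℂ) * z ^ ((χ q).val * 1)) ^ k *
          (∑ q, (x q : ℂ) * z ^ ((χ q).val * 2)) ^ (2 * l - k) := by
      intro k hk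
      rw [hR]
      rw [← expand h3 h0 x (fun i : Fin (2 * l) => if i.val < k then 1 else 2)]
      refine Finset.sum_congr rfl fun χ _ => ?_
      have hk' : k ≤ 2 * l := by simpa [Nat.lt_succ_iff] using hk
      rw [Fin.prod_univ_eq_prod_range (fun i => ∑ q, (x q : ℂ) * z ^ ((χ q).val * if i < k then 1 else 2)) (2 * l)]
      obtain ⟨j, hj⟩ := Nat.exists_eq_add_of_le hk'
      rw [hj, Finset.prod_range_add, Nat.add_sub_cancel_left]
      congr 1
      · rw [Finset.prod_congr rfl (g := fun _ => ∑ q, (x q : ℂ) * z ^ ((χ q).val * 1))]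
        · simp
        · intro i hi
          simp [Finset.mem_range.1 hi]
      · simp
    have hk2 : ∀ k ∈ Finset.range (2 * l + 1),
        (((3 : ℝ) ^ N * R k * (Nat.choose (2 * l) k) : ℝ) : ℂ) =
        (∑ χ : Fin N → Fin 3, (∑ q, (x q : ℂ) * z ^ ((χ q).val * 1)) ^ k *
          (∑ q, (x q : ℂ) * z ^ ((χ q).val * 2)) ^ (2 * l - k)) * (Nat.choose (2 * l) k : ℂ) := by
      intro k hk'
      rw [Complex.ofReal_mul, hk k hk', Complex.ofReal_natCast]
    rw [Complex.ofReal_sum, Complex.ofReal_sum, Finset.sum_congr rfl hk2]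
    simp only [Finset.sum_mul]
    rw [Finset.sum_comm]
    refine Finset.sum_congr rfl fun χ _ => ?_
    push_cast
    simp only [hX, mul_add, Finset.sum_add_distrib]
    rw [add_pow]
  rw [key]
  have := Finset.single_le_sum (f := fun k => (3 : ℝ) ^ N * R k * (Nat.choose (2 * l) k))
    (fun k _ => by have := hR0 k; positivity) (Finset.mem_range.2 (show l < 2 * l + 1 by omega))
  refine le_trans (le_of_eq ?_) this
  simp only [hR]
  ring

lemma sum_S {N : ℕ} (x : Fin N → ℝ) : ∑ χ : Fin N → Fin 3, ∑ q, x q * X (χ q) = 0 := by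
  induction N with
  | zero => simp
  | succ n ih =>
    rw [← (Fin.consEquiv (fun _ => Fin 3)).sum_comp, Fintype.sum_prod_type]
    simp only [Fin.consEquiv_apply, Fin.sum_univ_succ (n := n), Fin.cons_zero, Fin.cons_succ,
      Finset.sum_add_distrib, ih]
    rw [Finset.sum_comm]
    simp [Fin.sum_univ_three, X]
    ring

lemma symm {N : ℕ} (x : Fin N → ℝ) (l : ℕ) :
    (3 : ℝ) ^ N * ∑ χ : Fin N → Fin 3, (∑ q, x q * X (χ q)) ^ (2 * l) ≤
    ∑ χ : Fin N → Fin 3 × Fin 3, (∑ q, x q * (X (χ q).1 - X (χ q).2)) ^ (2 * l) := by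
  rw [← (Equiv.arrowProdEquivProdArrow (Fin N) (fun _ => Fin 3) (fun _ => Fin 3)).symm.sum_comp,
    Fintype.sum_prod_type, Finset.mul_sum]
  refine Finset.sum_le_sum fun χ _ => ?_
  have := Real.pow_arith_mean_le_arith_mean_pow_of_even (Finset.univ : Finset (Fin N → Fin 3))
    (fun _ => ((3 : ℝ) ^ N)⁻¹) (fun χ' => ∑ q, x q * X (χ q) - ∑ q, x q * X (χ' q))
    (fun _ _ => by positivity) (by simp) (n := 2 * l) (by simp)
  rw [← Finset.mul_sum, ← Finset.mul_sum, Finset.sum_sub_distrib, sum_S] at this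
  simp only [Finset.sum_const, Finset.card_univ, Fintype.card_fun, Fintype.card_fin, sub_zero,
    nsmul_eq_mul] at this
  push_cast at this
  rw [inv_mul_cancel_left₀ (by positivity), le_inv_mul_iff₀ (by positivity)] at this
  refine this.trans (le_of_eq ?_)
  refine Finset.sum_congr rfl fun χ' _ => ?_
  simp [Equiv.arrowProdEquivProdArrow, mul_sub, Finset.sum_sub_distrib]

lemma fac_bound (k : ℕ) : (4 : ℝ) * 9 ^ (k+1) * (k+1).factorial ≤
    9 * 2 ^ (k+1) * (2 * (k+1)).factorial := by
  induction k with
  | zero => norm_num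
  | succ n ih =>
    rw [show 2 * (n + 1 + 1) = (2 * (n + 1) + 1) + 1 by ring, Nat.factorial_succ (2 * (n+1) + 1),
      Nat.factorial_succ (2 * (n+1)), Nat.factorial_succ (n + 1)]
    push_cast
    have h1 : (0:ℝ) ≤ 9 * 2 ^ (n+1) * (2 * (n+1)).factorial := by positivity
    have h2 : (0:ℝ) ≤ n := by positivity
    rw [pow_succ (9:ℝ) (n+1), pow_succ (2:ℝ) (n+1)]
    set A := (4 : ℝ) * 9 ^ (n+1) * (n+1).factorial
    set B := (9:ℝ) * 2 ^ (n+1) * (2 * (n+1)).factorial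
    calc _ = A * (9 * (n + 2)) := by simp only [A]; ring
      _ ≤ B * (9 * (n + 2)) := by gcongr
      _ ≤ B * (2 * ((2 * n + 4) * (2 * n + 3))) := by
        refine mul_le_mul_of_nonneg_left ?_ h1
        nlinarith
      _ = _ := by simp only [B]; ring

def Y (a : Fin 3 × Fin 3) : ℝ := X a.1 - X a.2

lemma Y_odd (k : ℕ) : ∑ a, Y a ^ (2 * k + 1) = 0 := by
  simp [Fintype.sum_prod_type, Fin.sum_univ_three, Y, X]
  have : Odd (2 * k + 1) := ⟨k, rfl⟩
  rw [show (2:ℝ) + 1 = 3 by norm_num, show (-1:ℝ) - 2 = -3 by norm_num, this.neg_pow]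
  ring

lemma Y_even (k : ℕ) : (∑ a, Y a ^ (2 * k)) ≤ 9 * 2 ^ k * (2 * k).factorial / k.factorial := by
  rcases k with _ | k
  · simp
  · rw [le_div_iff₀ (by positivity)]
    refine le_trans (le_of_eq ?_) (fac_bound k)
    simp [Fintype.sum_prod_type, Fin.sum_univ_three, Y, X]
    rw [show (2:ℝ) + 1 = 3 by norm_num, show (-1:ℝ) - 2 = -3 by norm_num, pow_mul, pow_mul]
    left
    rw [show ((-3:ℝ)) ^ 2 = 9 by norm_num, show ((3:ℝ)) ^ 2 = 9 by norm_num]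
    ring

/-- even/odd split of the binomial sum -/
lemma sum_even (f : ℕ → ℝ) (l : ℕ) (h : ∀ k, f (2 * k + 1) = 0) :
    ∑ k ∈ Finset.range (2 * l + 1), f k = ∑ k ∈ Finset.range (l + 1), f (2 * k) := by
  induction l with
  | zero => simp
  | succ n ih =>
    rw [show 2 * (n + 1) + 1 = (2 * n + 1) + 1 + 1 by ring, Finset.sum_range_succ,
      Finset.sum_range_succ, ih, h, Finset.sum_range_succ _ (n + 1)]
    simp [mul_add]

lemma upper {N : ℕ} (x : Fin N → ℝ) (l : ℕ) :
    ∑ χ : Fin N → Fin 3 × Fin 3, (∑ q, x q * Y (χ q)) ^ (2 * l) ≤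
      9 ^ N * 2 ^ l * (2 * l).factorial / l.factorial * (∑ q, x q ^ 2) ^ l := by
  induction N generalizing l with
  | zero =>
    rcases l with _ | l
    · simp
    · simp
  | succ n ih =>
    rw [← (Fin.consEquiv (fun _ => Fin 3 × Fin 3)).sum_comp, Fintype.sum_prod_type]
    simp only [Fin.consEquiv_apply, Fin.sum_univ_succ (n := n), Fin.cons_zero, Fin.cons_succ]
    have e1 : ∑ a : Fin 3 × Fin 3, ∑ χ : Fin n → Fin 3 × Fin 3,
        (x 0 * Y a + ∑ q : Fin n, x q.succ * Y (χ q)) ^ (2 * l) =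
        ∑ k ∈ Finset.range (2 * l + 1), (x 0) ^ k * (∑ a, Y a ^ k) *
          (∑ χ : Fin n → Fin 3 × Fin 3, (∑ q : Fin n, x q.succ * Y (χ q)) ^ (2 * l - k)) *
            (Nat.choose (2 * l) k) := by
      simp only [add_pow, mul_pow]
      rw [Finset.sum_congr rfl (fun a _ => Finset.sum_comm), Finset.sum_comm]
      refine Finset.sum_congr rfl fun k _ => ?_
      simp only [Finset.mul_sum, Finset.sum_mul]
      rw [Finset.sum_comm]
    rw [e1, sum_even _ _ (fun k => by rw [Y_odd]; simp), add_pow, Finset.mul_sum]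
    refine Finset.sum_le_sum fun k hk => ?_
    have hk' : k ≤ l := by simpa [Nat.lt_succ_iff] using hk
    obtain ⟨j, rfl⟩ := Nat.exists_eq_add_of_le hk'
    rw [show 2 * (k + j) - 2 * k = 2 * j by omega, Nat.add_sub_cancel_left]
    have hi := ih (fun q => x q.succ) j
    have hy := Y_even k
    rw [pow_mul (x 0)]
    have hs : 0 ≤ ∑ χ : Fin n → Fin 3 × Fin 3, (∑ q : Fin n, x q.succ * Y (χ q)) ^ (2 * j) :=
      Finset.sum_nonneg fun _ _ => (even_two_mul j).pow_nonneg _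
    calc _ ≤ (x 0 ^ 2) ^ k * (9 * 2 ^ k * (2 * k).factorial / k.factorial) *
          (9 ^ n * 2 ^ j * (2 * j).factorial / j.factorial * (∑ q : Fin n, x q.succ ^ 2) ^ j) *
            (Nat.choose (2 * (k + j)) (2 * k)) := by gcongr
      _ = _ := by
        rw [Nat.cast_choose ℝ (show 2 * k ≤ 2 * (k + j) by omega), Nat.cast_choose ℝ (show k ≤ k + j by omega),
          show 2 * (k + j) - 2 * k = 2 * j by omega, Nat.add_sub_cancel_left]
        have a1 : ((2 * k).factorial : ℝ) ≠ 0 := by positivity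
        have a2 : ((2 * j).factorial : ℝ) ≠ 0 := by positivity
        have a3 : ((k + j).factorial : ℝ) ≠ 0 := by positivity
        field_simp
        ring

lemma finite_bound {N : ℕ} (x : Fin N → ℝ) (hx : ∀ q, 0 ≤ x q) (l : ℕ) :
    (∑ p : Fin (2 * l) → Fin N,
        if (∀ q, 3 ∣ ∑ i, if p i = q then (if i.val < l then 1 else 2) else 0)
          then ∏ i, x (p i) else 0) ≤ 2 ^ l * l.factorial * (∑ q, x q ^ 2) ^ l := by
  have h1 := lower x hx l
  have h2 := symm x l
  have h3 : _ ≤ _ := upper x l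
  set G := (∑ p : Fin (2 * l) → Fin N,
        if (∀ q, 3 ∣ ∑ i, if p i = q then (if i.val < l then 1 else 2) else 0)
          then ∏ i, x (p i) else 0)
  have h4 := (mul_le_mul_of_nonneg_left h1 (show (0:ℝ) ≤ 3 ^ N by positivity)).trans (h2.trans h3)
  rw [Nat.cast_choose ℝ (show l ≤ 2 * l by omega), show 2 * l - l = l by omega] at h4
  have hc : (0:ℝ) < 9 ^ N * (2 * l).factorial / (l.factorial * l.factorial) := by positivity
  refine le_of_mul_le_mul_left ?_ hc
  refine le_trans (le_of_eq ?_) (h4.trans (le_of_eq ?_))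
  · rw [show (9:ℝ) = 3 * 3 by norm_num, mul_pow]; ring
  · field_simp

end PT

/-- For a positive integer `ℓ` and real `y ≥ 2`, the sum over ordered `2ℓ`-tuples of primes
`p₁, …, p₂ℓ`, all exceeding `y`, such that `p₁ ⋯ p_ℓ p_{ℓ+1}² ⋯ p_{2ℓ}²` is a perfect cube,
of `1 / (p₁ ⋯ p_{2ℓ})`, is at most `2^ℓ ℓ! (∑_{p > y} 1/p²)^ℓ`. -/
theorem prime_tuple_cube_sum_bound (ℓ : ℕ) (hℓ : 1 ≤ ℓ) (y : ℝ) (hy : 2 ≤ y) :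
    (∑' p : Fin (2 * ℓ) → ℕ,
      if (∀ i, (p i).Prime ∧ y < p i) ∧
          (∃ c : ℕ, (∏ i : Fin (2 * ℓ), if i.val < ℓ then p i else (p i) ^ 2) = c ^ 3)
      then (1 : ℝ) / ∏ i, (p i : ℝ) else 0)
    ≤ 2 ^ ℓ * (Nat.factorial ℓ) *
        (∑' q : ℕ, if q.Prime ∧ y < q then (1 : ℝ) / q ^ 2 else 0) ^ ℓ := by
  have hnn : ∀ q : ℕ, (0:ℝ) ≤ if q.Prime ∧ y < q then (1 : ℝ) / q ^ 2 else 0 := by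
    intro q; split_ifs <;> positivity
  have hsum : Summable fun q : ℕ => if q.Prime ∧ y < q then (1 : ℝ) / q ^ 2 else 0 := by
    refine Summable.of_nonneg_of_le hnn (fun q => ?_)
      (Real.summable_one_div_nat_pow.2 (by norm_num : 1 < 2))
    split_ifs
    · exact le_rfl
    · positivity
  have hT : 0 ≤ ∑' q : ℕ, if q.Prime ∧ y < q then (1 : ℝ) / q ^ 2 else 0 := tsum_nonneg hnn
  refine Real.tsum_le_of_sum_le ?_ ?_
  · intro p
    simp only [Pi.zero_apply]
    split_ifs <;> positivity
  intro T
  obtain ⟨N, hN⟩ : ∃ N : ℕ, ∀ p ∈ T, ∀ i, p i < N := by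
    refine ⟨(T.sup fun p => Finset.univ.sup p) + 1, fun p hp i => Nat.lt_succ_of_le ?_⟩
    exact (Finset.le_sup (f := p) (Finset.mem_univ i)).trans
      (Finset.le_sup (f := fun p : Fin (2 * ℓ) → ℕ => Finset.univ.sup p) hp)
  set x : Fin N → ℝ := fun q => if q.val.Prime ∧ y < q.val then (1 : ℝ) / q.val else 0 with hxd
  have hx : ∀ q, 0 ≤ x q := by
    intro q; simp only [hxd]; split_ifs <;> positivity
  have hfb := PT.finite_bound x hx ℓ
  have hx2 : ∑ q, x q ^ 2 ≤ ∑' q : ℕ, if q.Prime ∧ y < q then (1 : ℝ) / q ^ 2 else 0 := by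
    have : ∑ q, x q ^ 2 = ∑ q ∈ Finset.range N, if q.Prime ∧ y < q then (1 : ℝ) / q ^ 2 else 0 := by
      rw [← Fin.sum_univ_eq_sum_range]
      refine Finset.sum_congr rfl fun q _ => ?_
      simp only [hxd]
      split_ifs <;> simp
    rw [this]
    exact hsum.sum_le_tsum _ (fun q _ => hnn q)
  have hx20 : 0 ≤ ∑ q, x q ^ 2 := Finset.sum_nonneg fun _ _ => sq_nonneg _
  refine le_trans ?_ (hfb.trans (by gcongr))
  have hinj : Function.Injective (fun (p : Fin (2 * ℓ) → Fin N) (i : Fin (2 * ℓ)) => (p i).val) := by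
    intro p p' h
    funext i
    exact Fin.ext (congrFun h i)
  have hsub : T ⊆ (Finset.univ : Finset (Fin (2 * ℓ) → Fin N)).map ⟨_, hinj⟩ := by
    intro p hp
    simp only [Finset.mem_map, Finset.mem_univ, true_and, Function.Embedding.coeFn_mk]
    exact ⟨fun i => ⟨p i, hN p hp i⟩, rfl⟩
  refine (Finset.sum_le_sum_of_subset_of_nonneg hsub ?_).trans ?_
  · intro p _ _
    split_ifs <;> positivity
  rw [Finset.sum_map]
  refine Finset.sum_le_sum fun p _ => ?_
  simp only [Function.Embedding.coeFn_mk]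
  have hprod : 0 ≤ ∏ i, x (p i) := Finset.prod_nonneg fun i _ => hx _
  split_ifs with h1 h2 h2
  · simp only [hxd]
    simp [h1.1]
  · exfalso
    apply h2
    obtain ⟨hp, c, hc⟩ := h1
    intro q
    have hf := congrArg (fun n => n.factorization q.val) hc
    simp only [Nat.factorization_pow, Finsupp.smul_apply, smul_eq_mul] at hf
    rw [Nat.factorization_prod] at hf
    · refine ⟨c.factorization q, ?_⟩
      rw [← hf, Finsupp.finsetSum_apply]
      refine Finset.sum_congr rfl fun i _ => ?_
      have hpi := (hp i).1
      by_cases hi : i.val < ℓ <;>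
        simp [hi, Nat.Prime.factorization hpi, Finsupp.single_apply, Fin.ext_iff]
    · intro i _
      have := (hp i).1.ne_zero
      split_ifs <;> positivity
  · exact hprod
  · exact le_rfl
end
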